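/- Let F : S → G(S) be a Markov chain on a measurable space S and let A, B ⊆ S be measurable. There exists a distribution-valued Streett supermartingale for (F, A, B) if and only if ℙ_{s₀}[Streett(A,B)] = 1 for every initial state s₀ ∈ S. -/

import Mathlib

open MeasureTheory ProbabilityTheory Set
open scoped ENNReal NNReal

variable {S : Type*} [MeasurableSpace S]

/-- Prepend an initial state to a trace. -/
def prep (s₀ : S) (ω : ℕ → S) : ℕ → S := fun n => Nat.rec s₀ (fun k _ => ω k) n

/-- The Streett condition for the pair `(A, B)`: either `A` is visited only
finitely often, or `B` is visited infinitely often. -/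
def streett (A B : Set S) : Set (ℕ → S) :=
  {ω | {i : ℕ | ω i ∈ A}.Finite ∨ {i : ℕ | ω i ∈ B}.Infinite}

/-- The stochastic order on distributions over `ℕ∞`:
`ζ₁ ≤ ζ₂` iff `ζ₁([a,∞]) ≤ ζ₂([a,∞])` for all `a ∈ ℕ`. -/
def stochLE (ζ₁ ζ₂ : Measure ℕ∞) : Prop :=
  ∀ a : ℕ, ζ₁ (Ici (a : ℕ∞)) ≤ ζ₂ (Ici (a : ℕ∞))

/-- The next-time operator on distribution-valued functions:
`(𝕏 r)(s)(E) = ∫ r(s')(E) dF(s)(s')`. -/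
noncomputable def nextTimeD (F : Kernel S S) (r : S → Measure ℕ∞) : S → Measure ℕ∞ :=
  fun s => (F s : Measure S).bind r

/-- The shift `1 ⊕ ζ` of a distribution on `ℕ∞`. -/
noncomputable def shift1 (ζ : Measure ℕ∞) : Measure ℕ∞ := ζ.map (· + 1)

/-- A distribution-valued Streett supermartingale (DVSSM) for `(F, A, B)`:
a measurable family `r` of probability distributions on `ℕ∞` concentrated on `ℕ`
with `1 ⊕ (𝕏 r)(x) ≤ r(x)` on `A ∖ B` and `(𝕏 r)(x) ≤ r(x)` outside `A ∪ B`
(in the stochastic order). -/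
def IsDVSSM (F : Kernel S S) (A B : Set S) (r : S → Measure ℕ∞) : Prop :=
  Measurable r ∧ (∀ s, IsProbabilityMeasure (r s)) ∧
    (∀ s, r s {n : ℕ∞ | n < ⊤} = 1) ∧
    (∀ x ∈ A \ B, stochLE (shift1 (nextTimeD F r x)) (r x)) ∧
    (∀ x ∉ A ∪ B, stochLE (nextTimeD F r x) (r x))

instance borelENat : BorelSpace ℕ∞ := ⟨borel_eq_top_of_countable.symm⟩

/-- Shift a trace by one step. -/
def tl (ω : ℕ → S) : ℕ → S := fun n => ω (n + 1)

open Classical in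
/-- Visits to `A` before `B` in the first `N` steps. -/
noncomputable def cntN (A B : Set S) : ℕ → (ℕ → S) → ℕ∞
  | 0, _ => 0
  | N + 1, ω => if ω 0 ∈ B then 0 else (if ω 0 ∈ A then 1 else 0) + cntN A B N (tl ω)

/-- Visits to `A` before `B`. -/
noncomputable def cnt (A B : Set S) (ω : ℕ → S) : ℕ∞ := ⨆ N, cntN A B N ω

lemma tl_prep (s : S) (ω : ℕ → S) : tl (prep s ω) = ω := rfl

lemma prep_zero (s : S) (ω : ℕ → S) : prep s ω 0 = s := rfl

lemma measurable_tl : Measurable (tl : (ℕ → S) → ℕ → S) :=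
  measurable_pi_lambda _ fun n => measurable_pi_apply (n + 1)

lemma measurable_prep2 : Measurable (fun p : S × (ℕ → S) => prep p.1 p.2) := by
  refine measurable_pi_lambda _ fun n => ?_
  cases n with
  | zero => exact measurable_fst
  | succ n => exact (measurable_pi_apply n).comp measurable_snd

lemma measurable_prep (s : S) : Measurable (prep s) :=
  measurable_prep2.comp measurable_prodMk_left

lemma measurable_step (P : Kernel S (ℕ → S)) [IsMarkovKernel P] :
    Measurable (fun s => (P s).map (prep s)) := by
  have : (fun s => (P s).map (prep s)) =
      fun s => ((Kernel.id ×ₖ P).map (fun p : S × (ℕ → S) => prep p.1 p.2)) s := by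
    funext s
    rw [Kernel.map_apply _ measurable_prep2, Kernel.prod_apply, Kernel.id_apply,
      Measure.dirac_prod, Measure.map_map measurable_prep2 measurable_prodMk_left]
    rfl
  rw [this]
  exact Kernel.measurable _

lemma P_apply (F : Kernel S S) (P : Kernel S (ℕ → S)) [IsMarkovKernel P]
    (hP : ∀ s₀ : S, (P s₀ : Measure (ℕ → S)) = (F s₀).bind fun s₁ => (P s₁).map (prep s₁))
    (s : S) {E : Set (ℕ → S)} (hE : MeasurableSet E) :
    P s E = ∫⁻ s₁, P s₁ (prep s₁ ⁻¹' E) ∂(F s) := by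
  rw [hP s, Measure.bind_apply hE (measurable_step P).aemeasurable]
  refine lintegral_congr fun s₁ => ?_
  rw [Measure.map_apply (measurable_prep s₁) hE]

open Classical in
lemma measurable_cntN {A B : Set S} (hA : MeasurableSet A) (hB : MeasurableSet B) (N : ℕ) :
    Measurable (cntN A B N) := by
  induction N with
  | zero => exact measurable_const
  | succ N ih =>
    have h0 : Measurable (fun ω : ℕ → S => ω 0) := measurable_pi_apply 0
    refine Measurable.ite (h0 hB) measurable_const ?_
    have h1 : Measurable (fun ω : ℕ → S => cntN A B N (tl ω)) := ih.comp measurable_tl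
    have h2 : Measurable (fun x : ℕ∞ => 1 + x) := by fun_prop
    have h3 : Measurable (fun x : ℕ∞ => 0 + x) := by fun_prop
    have : Measurable fun ω : ℕ → S =>
        if ω 0 ∈ A then 1 + cntN A B N (tl ω) else 0 + cntN A B N (tl ω) :=
      Measurable.ite (h0 hA) (h2.comp h1) (h3.comp h1)
    convert this using 2 with ω
    by_cases h : ω 0 ∈ A <;> simp [h]

lemma measurable_cnt {A B : Set S} (hA : MeasurableSet A) (hB : MeasurableSet B) :
    Measurable (cnt A B) :=
  Measurable.iSup fun N => measurable_cntN hA hB N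

lemma cntN_mono (A B : Set S) (ω : ℕ → S) : Monotone fun N => cntN A B N ω := by
  refine monotone_nat_of_le_succ fun N => ?_
  induction N generalizing ω with
  | zero => exact zero_le
  | succ N ih =>
    rw [cntN, cntN]
    by_cases h : ω 0 ∈ B
    · simp only [h, if_true, le_refl]
    · simp only [h, if_false]
      exact add_le_add_right (ih _) _

open Classical in
lemma cnt_rec (A B : Set S) (ω : ℕ → S) :
    cnt A B ω = if ω 0 ∈ B then 0 else (if ω 0 ∈ A then 1 else 0) + cnt A B (tl ω) := by
  have : cnt A B ω = ⨆ N, cntN A B (N + 1) ω :=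
    ((cntN_mono A B ω).iSup_nat_add 1).symm
  rw [this]
  simp only [cntN]
  by_cases h : ω 0 ∈ B
  · simp [h]
  · simp only [h, if_false]
    rw [cnt, ENat.add_iSup]

lemma cnt_B {A B : Set S} {ω : ℕ → S} (h : ω 0 ∈ B) : cnt A B ω = 0 := by
  rw [cnt_rec]; simp [h]

lemma cnt_A {A B : Set S} {ω : ℕ → S} (h : ω 0 ∉ B) (h' : ω 0 ∈ A) :
    cnt A B ω = cnt A B (tl ω) + 1 := by
  rw [cnt_rec]; simp [h, h', add_comm]

lemma cnt_N {A B : Set S} {ω : ℕ → S} (h : ω 0 ∉ B) (h' : ω 0 ∉ A) :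
    cnt A B ω = cnt A B (tl ω) := by
  rw [cnt_rec]; simp [h, h']

lemma cnt_le (A B : Set S) (ω : ℕ → S) : cnt A B ω ≤ cnt A B (tl ω) + 1 := by
  by_cases h : ω 0 ∈ B
  · simp [cnt_B h]
  by_cases h' : ω 0 ∈ A
  · exact (cnt_A h h').le
  · rw [cnt_N h h']; exact le_self_add

lemma cnt_lt_of_B {A B : Set S} (k : ℕ) (ω : ℕ → S) (h : ω k ∈ B) : cnt A B ω ≤ k := by
  induction k generalizing ω with
  | zero => simp [cnt_B h]
  | succ k ih =>
    refine (cnt_le A B ω).trans ?_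
    push_cast
    exact add_le_add_left (ih (tl ω) h) 1

lemma cnt_lt_of_A {A B : Set S} (k : ℕ) (ω : ℕ → S) (h : ∀ m, k ≤ m → ω m ∉ A) :
    cnt A B ω ≤ k := by
  induction k generalizing ω with
  | zero =>
    refine iSup_le fun N => ?_
    induction N generalizing ω with
    | zero => exact le_rfl
    | succ N ih =>
      have h0 := h 0 le_rfl
      simp only [cntN, h0, if_false, zero_add]
      split_ifs
      · exact zero_le
      · exact ih (tl ω) fun m _ => h (m + 1) (Nat.zero_le _)
  | succ k ih =>
    refine (cnt_le A B ω).trans ?_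
    push_cast
    exact add_le_add_left (ih (tl ω) fun m hm => h (m + 1) (by omega)) 1

lemma cnt_ne_top {A B : Set S} {ω : ℕ → S} (h : ω ∈ streett A B) : cnt A B ω < ⊤ := by
  rcases h with h | h
  · obtain ⟨n, hn⟩ := h.bddAbove
    refine (cnt_lt_of_A (n + 1) ω fun m hm hmA => ?_).trans_lt (ENat.natCast_lt_top _)
    have : m ≤ n := hn hmA
    omega
  · obtain ⟨k, hk⟩ := h.nonempty
    exact (cnt_lt_of_B k ω hk).trans_lt (ENat.natCast_lt_top _)

lemma streett_prep {A B : Set S} {ω : ℕ → S} (s : S) (h : ω ∈ streett A B) :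
    prep s ω ∈ streett A B := by
  rcases h with h | h
  · left
    refine ((h.image Nat.succ).insert 0).subset ?_
    rintro (_ | i) hi
    · simp
    · right; exact ⟨i, hi, rfl⟩
  · right
    refine (h.image Nat.succ_injective.injOn).mono ?_
    rintro _ ⟨i, hi, rfl⟩
    exact hi

lemma le_cnt_step {A B : Set S} (c : ℕ∞) (k : ℕ) (ω : ℕ → S) (hB : ∀ m, ω m ∉ B) (hk : ω k ∈ A)
    (hc : c ≤ cnt A B (fun n => ω (n + (k + 1)))) : c + 1 ≤ cnt A B ω := by
  induction k generalizing ω with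
  | zero =>
    rw [cnt_A (hB 0) hk]
    exact add_le_add_left hc 1
  | succ k ih =>
    have := ih (tl ω) (fun m => hB (m + 1)) hk hc
    by_cases h' : ω 0 ∈ A
    · rw [cnt_A (hB 0) h']; exact this.trans le_self_add
    · rwa [cnt_N (hB 0) h']

lemma cnt_top {A B : Set S} {ω : ℕ → S} (hB : ∀ m, ω m ∉ B) (hA : ∀ n, ∃ m, n ≤ m ∧ ω m ∈ A) :
    cnt A B ω = ⊤ := by
  refine ENat.eq_top_iff_forall_ge.2 fun a => ?_
  induction a generalizing ω with
  | zero => exact zero_le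
  | succ a ih =>
    obtain ⟨k, -, hk⟩ := hA 0
    push_cast
    refine le_cnt_step _ k ω hB hk (ih (fun m => hB _) fun n => ?_)
    obtain ⟨m, hm, hmA⟩ := hA (n + (k + 1))
    refine ⟨m - (k + 1), by omega, ?_⟩
    rwa [Nat.sub_add_cancel (by omega)]

lemma tl_iterate (n : ℕ) (ω : ℕ → S) : tl^[n] ω = fun m => ω (m + n) := by
  induction n generalizing ω with
  | zero => rfl
  | succ n ih =>
    change tl^[n] (tl ω) = _
    rw [ih]
    rfl

lemma streett_of_cnt {A B : Set S} {ω : ℕ → S} (h : ∀ n, cnt A B (tl^[n] ω) < ⊤) :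
    ω ∈ streett A B := by
  by_contra hc
  have hc' : ¬ ({i : ℕ | ω i ∈ A}.Finite ∨ {i : ℕ | ω i ∈ B}.Infinite) := hc
  rw [not_or, Set.not_infinite] at hc'
  obtain ⟨hA, hB⟩ := hc'
  obtain ⟨n, hn⟩ := hB.bddAbove
  refine (h (n + 1)).ne ?_
  rw [tl_iterate]
  refine cnt_top (fun m hm => ?_) fun k => ?_
  · have : m + (n + 1) ≤ n := hn hm
    omega
  · obtain ⟨m, hm, hkm⟩ := Set.Infinite.exists_gt hA (k + (n + 1))
    refine ⟨m - (n + 1), by omega, ?_⟩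
    have : m - (n + 1) + (n + 1) = m := by omega
    rw [this]; exact hm

lemma nextTimeD_Ici (F : Kernel S S) {r : S → Measure ℕ∞} (hr : Measurable r) (s : S) (a : ℕ∞) :
    nextTimeD F r s (Ici a) = ∫⁻ s', r s' (Ici a) ∂(F s) :=
  Measure.bind_apply measurableSet_Ici hr.aemeasurable

lemma shift1_Ici (ζ : Measure ℕ∞) (a : ℕ) :
    shift1 ζ (Ici ((a + 1 : ℕ) : ℕ∞)) = ζ (Ici (a : ℕ∞)) := by
  have hm : Measurable (fun x : ℕ∞ => x + 1) := by fun_prop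
  rw [shift1, Measure.map_apply hm measurableSet_Ici]
  congr 1
  ext x
  simp [ENat.add_le_add_iff_right]

lemma key (F : Kernel S S) (P : Kernel S (ℕ → S)) [IsMarkovKernel P]
    (hP : ∀ s₀ : S, (P s₀ : Measure (ℕ → S)) = (F s₀).bind fun s₁ => (P s₁).map (prep s₁))
    (A B : Set S) (hA : MeasurableSet A) (hB : MeasurableSet B)
    (r : S → Measure ℕ∞) (hr : IsDVSSM F A B r) (N a : ℕ) (s : S) :
    P s {ω | (a : ℕ∞) ≤ cntN A B N (prep s ω)} ≤ r s (Ici (a : ℕ∞)) := by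
  obtain ⟨hm, hp, -, h1, h2⟩ := hr
  have hzero : ∀ s (E : Set (ℕ → S)), P s E ≤ r s (Ici ((0 : ℕ) : ℕ∞)) := fun s E => by
    have := hp s
    have : (Ici ((0 : ℕ) : ℕ∞)) = univ := by ext; simp
    rw [this, measure_univ]; exact prob_le_one
  induction N generalizing a s with
  | zero =>
    cases a with
    | zero => exact hzero _ _
    | succ a => simp [cntN]
  | succ N ih =>
    have hstep : ∀ a : ℕ, P s {ω | (a : ℕ∞) ≤ cntN A B N ω} ≤ nextTimeD F r s (Ici (a : ℕ∞)) := by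
      intro a
      rw [nextTimeD_Ici F hm, P_apply F P hP s
        (measurableSet_le measurable_const (measurable_cntN hA hB N))]
      exact lintegral_mono fun s' => ih a s'
    cases a with
    | zero => exact hzero _ _
    | succ a =>
      simp only [cntN, tl_prep, prep_zero]
      by_cases hsB : s ∈ B
      · simp [hsB]
      by_cases hsA : s ∈ A
      · refine le_trans ?_ (h1 s ⟨hsA, hsB⟩ (a + 1))
        rw [shift1_Ici]
        refine le_trans (measure_mono fun ω hω => ?_) (hstep a)
        simpa [hsA, hsB, add_comm (1 : ℕ∞), ENat.add_le_add_iff_right] using hω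
      · refine le_trans ?_ (h2 s (by simp [hsA, hsB]) (a + 1))
        refine le_trans (measure_mono fun ω hω => ?_) (hstep (a + 1))
        simpa [hsA, hsB] using hω

lemma forward (F : Kernel S S) (P : Kernel S (ℕ → S)) [IsMarkovKernel P]
    (hP : ∀ s₀ : S, (P s₀ : Measure (ℕ → S)) = (F s₀).bind fun s₁ => (P s₁).map (prep s₁))
    (A B : Set S) (hA : MeasurableSet A) (hB : MeasurableSet B)
    (r : S → Measure ℕ∞) (hr : IsDVSSM F A B r) (s₀ : S) : P s₀ (streett A B) = 1 := by
  have hE : MeasurableSet {ω | cnt A B ω = ⊤} :=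
    measurableSet_eq_fun (measurable_cnt hA hB) measurable_const
  have h0 : ∀ s, P s (prep s ⁻¹' {ω | cnt A B ω = ⊤}) = 0 := by
    intro s
    have := hr.2.1 s
    have hle : ∀ a : ℕ, P s (prep s ⁻¹' {ω | cnt A B ω = ⊤}) ≤ r s (Ici (a : ℕ∞)) := by
      intro a
      have hsub : prep s ⁻¹' {ω | cnt A B ω = ⊤} ⊆
          ⋃ N, {ω | (a : ℕ∞) ≤ cntN A B N (prep s ω)} := by
        intro ω hω
        have hω' : (⨆ N, cntN A B N (prep s ω)) = ⊤ := hω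
        have : (a : ℕ∞) < ⨆ N, cntN A B N (prep s ω) := by
          rw [hω']; exact ENat.natCast_lt_top a
        obtain ⟨N, hN⟩ := lt_iSup_iff.1 this
        exact mem_iUnion.2 ⟨N, hN.le⟩
      refine (measure_mono hsub).trans ?_
      rw [Monotone.measure_iUnion]
      · exact iSup_le fun N => key F P hP A B hA hB r hr N a s
      · intro N M hNM ω hω
        exact le_trans hω (cntN_mono A B (prep s ω) hNM)
    have hlim := tendsto_measure_iInter_atTop (μ := r s) (s := fun a : ℕ => Ici (a : ℕ∞))
      (fun a => measurableSet_Ici.nullMeasurableSet)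
      (fun a b hab => Ici_subset_Ici.2 (by exact_mod_cast hab)) ⟨0, measure_ne_top _ _⟩
    have hz : r s (⋂ a : ℕ, Ici (a : ℕ∞)) = 0 := by
      have hc : (⋂ a : ℕ, Ici (a : ℕ∞)) = {n : ℕ∞ | n < ⊤}ᶜ := by
        ext x
        simp [ENat.eq_top_iff_forall_ge]
      rw [hc, prob_compl_eq_zero_iff (MeasurableSet.of_discrete)]
      exact hr.2.2.1 s
    rw [hz] at hlim
    exact le_antisymm (ge_of_tendsto' hlim hle) (zero_le)
  have hn : ∀ n s, P s ((tl^[n]) ⁻¹' {ω | cnt A B ω = ⊤}) = 0 := by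
    intro n
    induction n with
    | zero =>
      intro s
      rw [Function.iterate_zero, preimage_id, P_apply F P hP s hE]
      simp only [h0, lintegral_zero]
    | succ n ih =>
      intro s
      rw [P_apply F P hP s ((measurable_tl.iterate (n + 1)) hE)]
      have : ∀ s₁, prep s₁ ⁻¹' (tl^[n + 1] ⁻¹' {ω | cnt A B ω = ⊤}) =
        tl^[n] ⁻¹' {ω | cnt A B ω = ⊤} := fun s₁ => by
        ext ω
        rfl
      simp only [this, ih, lintegral_zero]
  have hae : ∀ᵐ ω ∂(P s₀), ω ∈ streett A B := by
    have : ∀ᵐ ω ∂(P s₀), ∀ n, ω ∉ (tl^[n]) ⁻¹' {ω | cnt A B ω = ⊤} :=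
      ae_all_iff.2 fun n => measure_eq_zero_iff_ae_notMem.1 (hn n s₀)
    filter_upwards [this] with ω hω
    exact streett_of_cnt fun n => lt_top_iff_ne_top.2 (hω n)
  have : (streett A B : Set (ℕ → S)) =ᵐ[P s₀] univ := Filter.eventuallyEq_univ.2 hae
  rw [measure_congr this, measure_univ]

lemma backward (F : Kernel S S) (P : Kernel S (ℕ → S)) [IsMarkovKernel P]
    (hP : ∀ s₀ : S, (P s₀ : Measure (ℕ → S)) = (F s₀).bind fun s₁ => (P s₁).map (prep s₁))
    (A B : Set S) (hA : MeasurableSet A) (hB : MeasurableSet B)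
    (h : ∀ s₀ : S, P s₀ (streett A B) = 1) : ∃ r : S → Measure ℕ∞, IsDVSSM F A B r := by
  have hc := measurable_cnt hA hB
  have hrm : Measurable fun s => ((P s).map (prep s)).map (cnt A B) :=
    (Measure.measurable_map _ hc).comp (measurable_step P)
  have hnext : ∀ s, nextTimeD F (fun s => ((P s).map (prep s)).map (cnt A B)) s =
      (P s).map (cnt A B) := by
    intro s
    ext E hE
    rw [nextTimeD, Measure.bind_apply hE hrm.aemeasurable, Measure.map_apply hc hE,
      P_apply F P hP s (hc hE)]
    refine lintegral_congr fun s₁ => ?_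
    rw [Measure.map_apply hc hE, Measure.map_apply (measurable_prep s₁) (hc hE)]
  refine ⟨fun s => ((P s).map (prep s)).map (cnt A B), hrm, fun s => ?_, fun s => ?_,
    fun s hs => ?_, fun s hs => ?_⟩
  · have := Measure.isProbabilityMeasure_map (μ := P s) (measurable_prep s).aemeasurable
    exact Measure.isProbabilityMeasure_map hc.aemeasurable
  · change (((P s).map (prep s)).map (cnt A B)) (Iio ⊤) = 1
    rw [Measure.map_apply hc measurableSet_Iio,
      Measure.map_apply (measurable_prep s) (hc measurableSet_Iio)]
    refine le_antisymm prob_le_one ?_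
    rw [← h s]
    exact measure_mono fun ω hω => cnt_ne_top (streett_prep s hω)
  · rw [hnext]
    have hm : Measurable (fun x : ℕ∞ => x + 1) := by fun_prop
    have : shift1 ((P s).map (cnt A B)) = ((P s).map (prep s)).map (cnt A B) := by
      rw [shift1, Measure.map_map hm hc, Measure.map_map hc (measurable_prep s)]
      congr 1
      funext ω
      exact (cnt_A (ω := prep s ω) hs.2 hs.1).symm
    rw [this]
    exact fun a => le_rfl
  · rw [hnext]
    have : (P s).map (cnt A B) = ((P s).map (prep s)).map (cnt A B) := by
      rw [Measure.map_map hc (measurable_prep s)]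
      congr 1
      funext ω
      exact (cnt_N (ω := prep s ω) (fun h => hs (Or.inr h)) (fun h => hs (Or.inl h))).symm
    rw [this]
    exact fun a => le_rfl

/-- There exists a distribution-valued Streett supermartingale for `(F, A, B)` iff
the Streett condition for `(A, B)` holds almost surely from every initial state. -/
theorem exists_DVSSM_iff_streett_as
    (F : Kernel S S) [IsMarkovKernel F]
    (P : Kernel S (ℕ → S)) [IsMarkovKernel P]
    (hP : ∀ s₀ : S, (P s₀ : Measure (ℕ → S)) = (F s₀).bind fun s₁ => (P s₁).map (prep s₁))
    (A B : Set S) (hA : MeasurableSet A) (hB : MeasurableSet B) :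
    (∃ r : S → Measure ℕ∞, IsDVSSM F A B r) ↔
      (∀ s₀ : S, P s₀ (streett A B) = 1) := by
  exact ⟨fun ⟨r, hr⟩ s₀ => forward F P hP A B hA hB r hr s₀, backward F P hP A B hA hB⟩
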